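/- Let m ≥ 4 and n = 3m. Then for every connected simple graph G on n vertices with domination number 3, ρ(G) ≥ ρ(G_2(m−2, m−3, m−2)), with equality if and only if G is isomorphic to G_2(m−2, m−3, m−2). -/

import Mathlib

open SimpleGraph

/-- Adjacency matrix of a simple graph over ℝ. -/
noncomputable def adjMat {V : Type*} (G : SimpleGraph V) : Matrix V V ℝ :=
  Matrix.of fun i j => @ite ℝ (G.Adj i j) (Classical.propDecidable _) 1 0

/-- Spectral radius: the largest eigenvalue (supremum of the real spectrum)
of the adjacency matrix. -/
noncomputable def specRad {V : Type*} [Fintype V] [DecidableEq V]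
    (G : SimpleGraph V) : ℝ :=
  sSup (spectrum ℝ (adjMat G))

/-- `D` is a dominating set of `G`. -/
def IsDomSet {V : Type*} (G : SimpleGraph V) (D : Finset V) : Prop :=
  ∀ v ∉ D, ∃ u ∈ D, G.Adj u v

/-- The domination number of `G`. -/
noncomputable def domNum {V : Type*} [Fintype V] (G : SimpleGraph V) : ℕ :=
  sInf {k | ∃ D : Finset V, IsDomSet G D ∧ D.card = k}

/-- The tree `G₂(a,b,c)`: the path v1 v4 v5 v2 v6 v7 v3 (vertices `Sum.inl 0, …, Sum.inl 6`
in path order), with `a` pendant edges at v1, `b` pendant edges at v2 and `c` pendant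
edges at v3. -/
def G2graph (a b c : ℕ) : SimpleGraph (Fin 7 ⊕ (Fin a ⊕ Fin b ⊕ Fin c)) :=
  SimpleGraph.fromRel (fun x y =>
    (x = Sum.inl 0 ∧ y = Sum.inl 1) ∨
    (x = Sum.inl 1 ∧ y = Sum.inl 2) ∨
    (x = Sum.inl 2 ∧ y = Sum.inl 3) ∨
    (x = Sum.inl 3 ∧ y = Sum.inl 4) ∨
    (x = Sum.inl 4 ∧ y = Sum.inl 5) ∨
    (x = Sum.inl 5 ∧ y = Sum.inl 6) ∨
    (∃ j : Fin a, x = Sum.inl 0 ∧ y = Sum.inr (Sum.inl j)) ∨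
    (∃ j : Fin b, x = Sum.inl 3 ∧ y = Sum.inr (Sum.inr (Sum.inl j))) ∨
    (∃ j : Fin c, x = Sum.inl 6 ∧ y = Sum.inr (Sum.inr (Sum.inr j))))

/-!
A nonnegative vector `y` with `λ y ≤ A y`, strictly so at a vertex where `y` is positive, forces
`λ < ρ(G)` by the Rayleigh quotient. Let `λ` be the spectral radius of `G₂(m - 2, m - 3, m - 2)`,
which satisfies `λ² = m - 1 + d` for some `d < 3 / 2`.

If a vertex of `G` has degree at least `m`, its star, extended by small weights on at most two
vertices outside it, carries such a `y`. Otherwise a count of closed neighbourhoods shows that three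
vertices of degree `m - 1` have closed neighbourhoods partitioning the vertex set. By connectedness
the three stars can be put in a row such that one edge joins the first to the second and one the
second to the third. When these two edges meet the middle star at different leaves, they span a copy
of `G₂(m - 2, m - 3, m - 2)` in `G`, and any further edge of `G` increases the spectral radius. When
they meet it at the same leaf, a weighted sum of three stars is a strict test vector.
-/

open Matrix in
theorem dotProduct_mulVec_le_sSup_spectrum {n : Type*} [Fintype n] [DecidableEq n]
    {A : Matrix n n ℝ} (hA : A.IsHermitian) (y : n → ℝ) :
    y ⬝ᵥ A *ᵥ y ≤ sSup (spectrum ℝ A) * (y ⬝ᵥ y) := by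
  have hpsd : (algebraMap ℝ (Matrix n n ℝ) (sSup (spectrum ℝ A)) - A).PosSemidef := by
    open scoped MatrixOrder in
    exact Matrix.le_iff.1 <| le_algebraMap_of_spectrum_le (p := IsSelfAdjoint)
      (fun _ => le_csSup finite_real_spectrum.bddAbove) hA
  have := hpsd.dotProduct_mulVec_nonneg y
  rw [sub_mulVec, Algebra.algebraMap_eq_smul_one, smul_mulVec, one_mulVec, dotProduct_sub,
    dotProduct_smul, star_trivial, smul_eq_mul] at this
  linarith

theorem adjMat_eq_adjMatrix {V : Type*} (G : SimpleGraph V) [DecidableRel G.Adj] :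
    adjMat G = G.adjMatrix ℝ := by
  ext i j
  simp only [adjMat, Matrix.of_apply, adjMatrix_apply]
  congr

theorem adjMat_isHermitian {V : Type*} (G : SimpleGraph V) : (adjMat G).IsHermitian := by
  classical
  rw [adjMat_eq_adjMatrix, Matrix.IsHermitian, Matrix.conjTranspose_eq_transpose_of_trivial,
    transpose_adjMatrix]

theorem specRad_congr {V W : Type*} [Fintype V] [DecidableEq V] [Fintype W] [DecidableEq W]
    {G : SimpleGraph V} {H : SimpleGraph W} (e : G ≃g H) : specRad G = specRad H := by
  classical
  rw [specRad, specRad, adjMat_eq_adjMatrix, adjMat_eq_adjMatrix, ← e.reindex_adjMatrix ℝ]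
  exact congrArg sSup
    (AlgEquiv.spectrum_eq (Matrix.reindexAlgEquiv ℝ ℝ e.toEquiv) (G.adjMatrix ℝ)).symm

theorem sum_neighborFinset_eq_sum_ite {V : Type*} [Fintype V] (G : SimpleGraph V)
    [DecidableRel G.Adj] (y : V → ℝ) (v : V) :
    ∑ w ∈ G.neighborFinset v, y w = ∑ w, if G.Adj v w then y w else 0 := by
  rw [← Finset.sum_filter, neighborFinset_eq_filter]

section TestVector

variable {V : Type*} [Fintype V] [DecidableEq V] {G : SimpleGraph V} [DecidableRel G.Adj]
  {l : ℝ} {y : V → ℝ}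

theorem sum_mul_sum_neighborFinset_le_specRad_mul (G : SimpleGraph V) [DecidableRel G.Adj]
    (y : V → ℝ) :
    ∑ v, y v * ∑ w ∈ G.neighborFinset v, y w ≤ specRad G * ∑ v, y v * y v := by
  simpa only [specRad, dotProduct, adjMat_eq_adjMatrix, adjMatrix_mulVec_apply] using
    dotProduct_mulVec_le_sSup_spectrum (adjMat_isHermitian G) y

theorem lt_specRad_of_mul_le_sum_neighborFinset (hy : ∀ v, 0 ≤ y v)
    (h : ∀ v, l * y v ≤ ∑ w ∈ G.neighborFinset v, y w)
    (hlt : ∃ v, 0 < y v ∧ l * y v < ∑ w ∈ G.neighborFinset v, y w) : l < specRad G := by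
  obtain ⟨v, hv, hvlt⟩ := hlt
  have hpos : 0 < ∑ v, y v * y v :=
    Finset.sum_pos' (fun _ _ => mul_self_nonneg _) ⟨v, Finset.mem_univ v, mul_pos hv hv⟩
  refine lt_of_mul_lt_mul_right ?_ hpos.le
  calc l * ∑ v, y v * y v
      = ∑ v, y v * (l * y v) := by
        rw [Finset.mul_sum]; exact Finset.sum_congr rfl fun _ _ => by ring
    _ < ∑ v, y v * ∑ w ∈ G.neighborFinset v, y w :=
        Finset.sum_lt_sum (fun v _ => mul_le_mul_of_nonneg_left (h v) (hy v))
          ⟨v, Finset.mem_univ v, mul_lt_mul_of_pos_left hvlt hv⟩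
    _ ≤ specRad G * ∑ v, y v * y v := sum_mul_sum_neighborFinset_le_specRad_mul G y

-- Compare an eigenvector for `μ` with `y` at a vertex where their ratio is largest.
theorem le_of_mem_spectrum_of_sum_neighborFinset_le (hy : ∀ v, 0 < y v)
    (h : ∀ v, ∑ w ∈ G.neighborFinset v, y w ≤ l * y v) {μ : ℝ}
    (hμ : μ ∈ spectrum ℝ (adjMat G)) : μ ≤ l := by
  rw [← Matrix.spectrum_toLin', ← Module.End.hasEigenvalue_iff_mem_spectrum] at hμ
  obtain ⟨z, hz, hz0⟩ := hμ.exists_hasEigenvector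
  have hμz (v : V) : ∑ w ∈ G.neighborFinset v, z w = μ * z v := by
    simpa [adjMat_eq_adjMatrix] using congrFun (Module.End.mem_eigenspace_iff.1 hz) v
  obtain ⟨j, hj⟩ := Function.ne_iff.1 hz0
  obtain ⟨i, -, hmax⟩ := Finset.exists_max_image Finset.univ (fun v => |z v| / y v)
    ⟨j, Finset.mem_univ j⟩
  set M := |z i| / y i
  have hMpos : 0 < M :=
    (div_pos (abs_pos.2 hj) (hy j)).trans_le (hmax j (Finset.mem_univ j))
  have hzM (v : V) : |z v| ≤ M * y v := (div_le_iff₀ (hy v)).1 (hmax v (Finset.mem_univ v))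
  have hzi : M * y i = |z i| := div_mul_cancel₀ _ (hy i).ne'
  refine le_of_mul_le_mul_right ?_ (hzi ▸ mul_pos hMpos (hy i) : 0 < |z i|)
  calc μ * |z i| ≤ |μ * z i| := by
        rw [abs_mul]; exact mul_le_mul_of_nonneg_right (le_abs_self μ) (abs_nonneg _)
    _ ≤ ∑ w ∈ G.neighborFinset i, |z w| := hμz i ▸ Finset.abs_sum_le_sum_abs _ _
    _ ≤ M * ∑ w ∈ G.neighborFinset i, y w := by
        rw [Finset.mul_sum]; exact Finset.sum_le_sum fun w _ => hzM w
    _ ≤ M * (l * y i) := mul_le_mul_of_nonneg_left (h i) hMpos.le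
    _ = l * |z i| := by rw [← hzi]; ring

theorem specRad_eq_of_pos_of_sum_neighborFinset_eq [Nonempty V] (hy : ∀ v, 0 < y v)
    (h : ∀ v, ∑ w ∈ G.neighborFinset v, y w = l * y v) : specRad G = l := by
  refine IsGreatest.csSup_eq ⟨?_, fun μ =>
    le_of_mem_spectrum_of_sum_neighborFinset_le hy fun v => (h v).le⟩
  rw [← Matrix.spectrum_toLin', ← Module.End.hasEigenvalue_iff_mem_spectrum]
  refine Module.End.hasEigenvalue_of_hasEigenvector (x := y)
    ⟨Module.End.mem_eigenspace_iff.2 (funext fun v => ?_), fun h0 => ?_⟩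
  · simpa [adjMat_eq_adjMatrix] using h v
  · obtain ⟨v⟩ := ‹Nonempty V›
    exact (hy v).ne' (congrFun h0 v)

end TestVector

section SpanningSubgraph

variable {V : Type*} [Fintype V] [DecidableEq V] {G : SimpleGraph V}

theorem specRad_lt_specRad_of_lt {y : V → ℝ} {H : SimpleGraph V} [DecidableRel H.Adj] (hHG : H < G)
    (hy : ∀ v, 0 < y v) (h : ∀ v, ∑ w ∈ H.neighborFinset v, y w = specRad H * y v) :
    specRad H < specRad G := by
  classical
  have hsub (v : V) : H.neighborFinset v ⊆ G.neighborFinset v := fun w => by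
    simpa using fun hvw => hHG.le hvw
  obtain ⟨v, w, hG, hH⟩ : ∃ v w, G.Adj v w ∧ ¬H.Adj v w := by
    by_contra! hle
    exact hHG.not_ge hle
  refine lt_specRad_of_mul_le_sum_neighborFinset (fun v => (hy v).le) (fun v => ?_) ⟨v, hy v, ?_⟩
  · rw [← h v]
    exact Finset.sum_le_sum_of_subset_of_nonneg (hsub v) fun w _ _ => (hy w).le
  · rw [← h v]
    exact Finset.sum_lt_sum_of_subset (hsub v) (by simpa using hG) (by simpa using hH) (hy w)
      fun w _ _ => (hy w).le

theorem specRad_lt_or_nonempty_iso_of_bijective {W : Type*} [Fintype W] [DecidableEq W]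
    {H : SimpleGraph W} [DecidableRel H.Adj] {x : W → ℝ} (hx : ∀ v, 0 < x v)
    (h : ∀ v, ∑ w ∈ H.neighborFinset v, x w = specRad H * x v)
    (f : H →g G) (hf : Function.Bijective f) : specRad H < specRad G ∨ Nonempty (G ≃g H) := by
  let e : G.comap f ≃g G := Iso.comap (Equiv.ofBijective f hf) G
  rcases f.le_comap.eq_or_lt with heq | hlt
  · exact Or.inr ⟨heq ▸ e.symm⟩
  · rw [← specRad_congr e]
    exact Or.inl (specRad_lt_specRad_of_lt hlt hx h)

end SpanningSubgraph

section Domination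

variable {V : Type*} {G : SimpleGraph V} {C D : Finset V}

theorem IsDomSet.exists_eq_or_adj (hD : IsDomSet G D) (v : V) : ∃ u ∈ D, v = u ∨ G.Adj u v := by
  by_cases hv : v ∈ D
  · exact ⟨v, hv, Or.inl rfl⟩
  · obtain ⟨u, hu, huv⟩ := hD v hv
    exact ⟨u, hu, Or.inr huv⟩

theorem IsDomSet.one_le_card_filter [DecidableEq V] [DecidableRel G.Adj] (hD : IsDomSet G D)
    (v : V) :
    1 ≤ (D.filter fun u => v = u ∨ G.Adj u v).card := by
  simpa [Finset.one_le_card, Finset.filter_nonempty_iff] using hD.exists_eq_or_adj v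

/-- `C` is a perfect code (an efficient dominating set) of `G`: the closed neighbourhoods of the
vertices of `C` partition the vertex set. -/
def IsPerfectCode (G : SimpleGraph V) (C : Finset V) : Prop :=
  ∀ v, ∃! u, u ∈ C ∧ (v = u ∨ G.Adj u v)

theorem IsPerfectCode.isDomSet (hC : IsPerfectCode G C) : IsDomSet G C := fun v hv => by
  obtain ⟨u, ⟨hu, rfl | huv⟩, -⟩ := hC v
  exacts [absurd hu hv, ⟨u, hu, huv⟩]

theorem IsPerfectCode.ne_and_not_adj (hC : IsPerfectCode G C) {u w a : V} (hu : u ∈ C)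
    (hw : w ∈ C) (hne : u ≠ w) (hua : G.Adj u a) : a ≠ w ∧ ¬G.Adj w a :=
  not_or.1 fun h => hne ((hC a).unique ⟨hu, Or.inr hua⟩ ⟨hw, h⟩)

theorem exists_adj_of_mem_of_notMem (hG : G.Connected) {s : Set V} {u v : V}
    (hu : u ∈ s) (hv : v ∉ s) : ∃ a ∈ s, ∃ b ∉ s, G.Adj a b := by
  obtain ⟨p⟩ := hG.preconnected u v
  obtain ⟨d, -, hfst, hsnd⟩ := p.exists_boundary_dart s hu hv
  exact ⟨d.fst, hfst, d.snd, hsnd, d.adj⟩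

/-- `u` and `w` are joined by a walk of length three. For two vertices of a perfect code this says
that some edge runs between their closed neighbourhoods. -/
def Linked (G : SimpleGraph V) (u w : V) : Prop :=
  ∃ a b, G.Adj u a ∧ G.Adj a b ∧ G.Adj b w

theorem Linked.symm {u w : V} (h : Linked G u w) : Linked G w u := by
  obtain ⟨a, b, hua, hab, hbw⟩ := h
  exact ⟨b, a, hbw.symm, hab.symm, hua.symm⟩

theorem IsPerfectCode.exists_linked (hC : IsPerfectCode G C) (hG : G.Connected) {u w : V}
    (hu : u ∈ C) (hw : w ∈ C) (hne : u ≠ w) : ∃ x ∈ C, x ≠ u ∧ Linked G u x := by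
  have hwu : w ∉ {v | v = u ∨ G.Adj u v} := fun h =>
    hne ((hC w).unique ⟨hu, h⟩ ⟨hw, Or.inl rfl⟩)
  obtain ⟨a, ha, b, hb, hab⟩ := exists_adj_of_mem_of_notMem hG (Or.inl rfl) hwu
  obtain ⟨x, ⟨hx, hbx⟩, -⟩ := hC b
  have hxu : x ≠ u := by
    rintro rfl
    exact hb hbx
  have hua : G.Adj u a := ha.resolve_left fun h => hb (Or.inr (h ▸ hab))
  have hxb : G.Adj x b := hbx.resolve_left fun h =>
    hxu ((hC a).unique ⟨hx, Or.inr (h ▸ hab.symm)⟩ ⟨hu, Or.inr hua⟩)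
  exact ⟨x, hx, hxu, a, b, hua, hab, hxb.symm⟩

theorem IsPerfectCode.exists_linked_linked [DecidableEq V] (hC : IsPerfectCode G C)
    (hG : G.Connected) (hcard : C.card = 3) :
    ∃ u₁ u₂ u₃, C = {u₁, u₂, u₃} ∧ u₁ ≠ u₂ ∧ u₁ ≠ u₃ ∧ u₂ ≠ u₃ ∧
      Linked G u₁ u₂ ∧ Linked G u₂ u₃ := by
  obtain ⟨u, hu⟩ : C.Nonempty := Finset.card_pos.1 (by omega)
  obtain ⟨v, hv, hvu⟩ := C.exists_mem_ne (by omega) u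
  obtain ⟨x, hx, hxu, hux⟩ := hC.exists_linked hG hu hv hvu.symm
  have hxu' : x ∈ C.erase u := Finset.mem_erase.2 ⟨hxu, hx⟩
  obtain ⟨w, hw⟩ : ∃ w, (C.erase u).erase x = {w} := Finset.card_eq_one.1 <| by
    rw [Finset.card_erase_of_mem hxu', Finset.card_erase_of_mem hu, hcard]
  have hCuxw : C = {u, x, w} := by
    rw [← hw, Finset.insert_erase hxu', Finset.insert_erase hu]
  obtain ⟨hwx, hwu, hwC⟩ : w ≠ x ∧ w ≠ u ∧ w ∈ C := by
    simpa only [Finset.mem_erase] using hw.ge (Finset.mem_singleton_self w)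
  obtain ⟨y, hy, hyw, hwy⟩ := hC.exists_linked hG hwC hu hwu
  obtain rfl | rfl : y = u ∨ y = x := by simpa [hCuxw, hyw] using hy
  · exact ⟨x, y, w, hCuxw.trans (Finset.insert_comm y x {w}), hxu, hwx.symm, hwu.symm,
      hux.symm, hwy.symm⟩
  · exact ⟨u, y, w, hCuxw, hxu.symm, hwu.symm, hwx.symm, hux, hwy.symm⟩

variable [Fintype V]

theorem exists_isDomSet_card_eq_domNum (G : SimpleGraph V) :
    ∃ D : Finset V, IsDomSet G D ∧ D.card = domNum G :=
  Nat.sInf_mem (s := {k | ∃ D : Finset V, IsDomSet G D ∧ D.card = k})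
    ⟨_, Finset.univ, fun v hv => absurd (Finset.mem_univ v) hv, rfl⟩

theorem exists_adj_of_card_lt_card (hG : G.Connected) {s : Finset V} (hs : s.Nonempty)
    (hcard : s.card < Fintype.card V) :
    ∃ a ∈ s, ∃ b ∉ s, G.Adj a b := by
  obtain ⟨u, hu⟩ := hs
  obtain ⟨v, -, hv⟩ := Finset.exists_mem_notMem_of_card_lt_card (t := Finset.univ) hcard
  exact exists_adj_of_mem_of_notMem (s := s) hG hu hv

theorem card_filter_eq_or_adj [DecidableEq V] (G : SimpleGraph V) [DecidableRel G.Adj] (u : V) :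
    (Finset.univ.filter fun v => v = u ∨ G.Adj u v).card = G.degree u + 1 := by
  rw [← card_neighborFinset_eq_degree,
    ← Finset.card_insert_of_notMem (G.notMem_neighborFinset_self u)]
  congr 1
  ext v
  simp

theorem sum_degree_add_one_eq_sum_card_filter [DecidableEq V] (G : SimpleGraph V)
    [DecidableRel G.Adj] (D : Finset V) :
    ∑ u ∈ D, (G.degree u + 1) = ∑ v, (D.filter fun u => v = u ∨ G.Adj u v).card := by
  simp_rw [← card_filter_eq_or_adj]
  exact Finset.sum_card_bipartiteAbove_eq_sum_card_bipartiteBelow fun u v => v = u ∨ G.Adj u v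

variable [DecidableRel G.Adj]

theorem IsDomSet.card_le_sum_degree_add_one (hD : IsDomSet G D) :
    Fintype.card V ≤ ∑ u ∈ D, (G.degree u + 1) := by
  classical
  rw [sum_degree_add_one_eq_sum_card_filter, Fintype.card_eq_sum_ones]
  exact Finset.sum_le_sum fun v _ => hD.one_le_card_filter v

theorem IsDomSet.isPerfectCode (hD : IsDomSet G D)
    (h : ∑ u ∈ D, (G.degree u + 1) = Fintype.card V) : IsPerfectCode G D := by
  classical
  rw [sum_degree_add_one_eq_sum_card_filter, Fintype.card_eq_sum_ones] at h
  intro v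
  have hv := (Finset.sum_eq_sum_iff_of_le fun v _ => hD.one_le_card_filter v).1 h.symm v
    (Finset.mem_univ v)
  obtain ⟨u, hu⟩ := Finset.card_eq_one.1 hv.symm
  simp only [Finset.ext_iff, Finset.mem_filter, Finset.mem_singleton] at hu
  exact ⟨u, (hu u).2 rfl, fun w => (hu w).1⟩

theorem exists_isPerfectCode_of_degree_lt {m r : ℕ} (hm : 0 < m) (hdeg : ∀ v, G.degree v < m)
    (hcard : r * m ≤ Fintype.card V) (hdom : domNum G ≤ r) :
    Fintype.card V = r * m ∧
      ∃ C, IsPerfectCode G C ∧ C.card = r ∧ ∀ u ∈ C, G.degree u + 1 = m := by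
  obtain ⟨D, hD, hDcard⟩ := exists_isDomSet_card_eq_domNum G
  have hle : ∀ u ∈ D, G.degree u + 1 ≤ m := fun u _ => hdeg u
  have hlower := hD.card_le_sum_degree_add_one
  have hupper : ∑ u ∈ D, (G.degree u + 1) ≤ D.card * m := by
    simpa using Finset.sum_le_sum hle
  have hDr : D.card = r := le_antisymm (hDcard.trans_le hdom) <|
    le_of_mul_le_mul_right (hcard.trans (hlower.trans hupper)) hm
  rw [hDr] at hupper
  have hsum : ∑ u ∈ D, (G.degree u + 1) = ∑ _u ∈ D, m := by
    rw [Finset.sum_const, hDr, smul_eq_mul]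
    omega
  exact ⟨by omega, D, hD.isPerfectCode (by omega), hDr, (Finset.sum_eq_sum_iff_of_le hle).1 hsum⟩

end Domination

section G2graph

variable {l d : ℝ} {q : ℕ}

/-- For `λ² = q + 2 + d` and `λ² d² = (d + 1)(d + 2)`, the Perron eigenvector of
`G2graph (q + 1) q (q + 1)` with eigenvalue `λ = l`, scaled to be `1` on the leaves at `v1`. -/
noncomputable def g2Vector (l d : ℝ) (a b c : ℕ) : Fin 7 ⊕ (Fin a ⊕ Fin b ⊕ Fin c) → ℝ :=
  Sum.elim ![l, d + 1, l * d, 2 * (d + 1) / d, l * d, d + 1, l]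
    (Sum.elim (fun _ => 1) (Sum.elim (fun _ => 2 * (d + 1) / (l * d)) (fun _ => 1)))

theorem g2Vector_pos (hl : 0 < l) (hd : 0 < d) (a b c : ℕ) (v) : 0 < g2Vector l d a b c v := by
  rcases v with i | i | i | i
  · fin_cases i <;> dsimp [g2Vector] <;> positivity
  all_goals simp only [g2Vector, Sum.elim_inl, Sum.elim_inr]; positivity

theorem sum_neighborFinset_g2Vector [DecidableRel (G2graph (q + 1) q (q + 1)).Adj]
    (hl : 0 < l) (hd : 0 < d) (hld : l ^ 2 = q + 2 + d)
    (hd_eq : l ^ 2 * d ^ 2 = (d + 1) * (d + 2)) (v) :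
    ∑ w ∈ (G2graph (q + 1) q (q + 1)).neighborFinset v, g2Vector l d (q + 1) q (q + 1) w =
      l * g2Vector l d (q + 1) q (q + 1) v := by
  have hv1 : d + 1 + (q + 1) = l * l := by linear_combination -hld
  have hv5 : d + 1 + 2 * (d + 1) / d = l * (l * d) := by
    field_simp
    linear_combination -hd_eq
  have hv2 : l * d + (l * d + q * (2 * (d + 1) / (l * d))) = l * (2 * (d + 1) / d) := by
    field_simp
    linear_combination 2 * hd_eq - 2 * (d + 1) * hld
  have hleaf : 2 * (d + 1) / d = l * (2 * (d + 1) / (l * d)) := by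
    field_simp
  rw [sum_neighborFinset_eq_sum_ite]
  rcases v with i | i | i | i
  · fin_cases i <;> simp [Fin.sum_univ_seven, G2graph, g2Vector] <;> linarith [hv1, hv2, hv5]
  all_goals simp [G2graph, g2Vector, hleaf]

theorem specRad_G2graph (hl : 0 < l) (hd : 0 < d) (hld : l ^ 2 = q + 2 + d)
    (hd_eq : l ^ 2 * d ^ 2 = (d + 1) * (d + 2)) : specRad (G2graph (q + 1) q (q + 1)) = l := by
  classical
  exact specRad_eq_of_pos_of_sum_neighborFinset_eq (g2Vector_pos hl hd _ _ _)
    (sum_neighborFinset_g2Vector hl hd hld hd_eq)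

theorem exists_sq_mul_add_eq {k : ℝ} (hk : 3 ≤ k) :
    ∃ d, 0 < d ∧ d < 3 / 2 ∧ (k + d) * d ^ 2 = (d + 1) * (d + 2) := by
  have hcont : ContinuousOn (fun d : ℝ => (k + d) * d ^ 2 - (d + 1) * (d + 2))
      (Set.Icc 0 (3 / 2)) := by fun_prop
  obtain ⟨d, ⟨hd0, hd1⟩, hd⟩ := intermediate_value_Ioo (by norm_num) hcont
    (show (0 : ℝ) ∈ Set.Ioo _ _ by constructor <;> norm_num; linarith)
  exact ⟨d, hd0, hd1, sub_eq_zero.1 hd⟩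

theorem sub_one_mul_sub_two_lt_one (hd : 0 < d) (hd2 : d < 3 / 2)
    (hd_eq : l ^ 2 * d ^ 2 = (d + 1) * (d + 2)) : (d - 1) * (l ^ 2 - 2) < 1 := by
  have hgold : d ^ 2 - d - 1 < 0 := by nlinarith
  refine lt_of_mul_lt_mul_right (a := d ^ 2) ?_ (sq_nonneg d)
  linear_combination (d - 1) * hd_eq + mul_pos_of_neg_of_neg (sub_neg.2 (by linarith : d < 2)) hgold

theorem exists_mem_range_iff_of_card_eq {α : Type*} {s : Finset α} {n : ℕ} (hs : s.card = n) :
    ∃ f : Fin n → α, ∀ x, x ∈ Set.range f ↔ x ∈ s := by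
  refine ⟨fun i => (Finset.equivFinOfCardEq hs).symm i, fun x => ⟨?_, fun hx => ?_⟩⟩
  · rintro ⟨i, rfl⟩
    exact Subtype.prop _
  · exact ⟨Finset.equivFinOfCardEq hs ⟨x, hx⟩, by simp⟩

theorem adj_of_G2graph_adj {V : Type*} {G : SimpleGraph V} {a b c : ℕ}
    {g : Fin 7 ⊕ (Fin a ⊕ Fin b ⊕ Fin c) → V}
    (hpath : ∀ i : Fin 6, G.Adj (g (.inl i.castSucc)) (g (.inl i.succ)))
    (h₁ : ∀ j, G.Adj (g (.inl 0)) (g (.inr (.inl j))))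
    (h₂ : ∀ j, G.Adj (g (.inl 3)) (g (.inr (.inr (.inl j)))))
    (h₃ : ∀ j, G.Adj (g (.inl 6)) (g (.inr (.inr (.inr j))))) {x y}
    (hxy : (G2graph a b c).Adj x y) : G.Adj (g x) (g y) := by
  rcases hxy.2 with h | h
  on_goal 2 => apply Adj.symm
  all_goals
    rcases h with ⟨rfl, rfl⟩ | ⟨rfl, rfl⟩ | ⟨rfl, rfl⟩ | ⟨rfl, rfl⟩ | ⟨rfl, rfl⟩ | ⟨rfl, rfl⟩ |
      ⟨j, rfl, rfl⟩ | ⟨j, rfl, rfl⟩ | ⟨j, rfl, rfl⟩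
    exacts [hpath 0, hpath 1, hpath 2, hpath 3, hpath 4, hpath 5, h₁ j, h₂ j, h₃ j]

theorem exists_bijective_hom_of_isDomSet {V : Type*} [Fintype V] [DecidableEq V]
    {G : SimpleGraph V} [DecidableRel G.Adj] {p q r : ℕ} {u₁ a b u₂ b' c u₃ : V}
    (hdom : IsDomSet G {u₁, u₂, u₃}) (hcard : Fintype.card V = p + q + r + 7)
    (hu₁ : G.degree u₁ = p + 1) (hu₂ : G.degree u₂ = q + 2) (hu₃ : G.degree u₃ = r + 1)
    (h₁a : G.Adj u₁ a) (hab : G.Adj a b) (hb₂ : G.Adj b u₂) (h₂b' : G.Adj u₂ b')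
    (hb'c : G.Adj b' c) (hc₃ : G.Adj c u₃) (hbb' : b ≠ b') :
    ∃ f : G2graph p q r →g G, Function.Bijective f := by
  obtain ⟨s₁, hs₁⟩ : ∃ s : Fin p → V, ∀ v, v ∈ Set.range s ↔ v ≠ a ∧ G.Adj u₁ v := by
    simpa using exists_mem_range_iff_of_card_eq (s := (G.neighborFinset u₁).erase a)
      (by simp [Finset.card_erase_of_mem, h₁a, hu₁])
  obtain ⟨s₂, hs₂⟩ : ∃ s : Fin q → V, ∀ v, v ∈ Set.range s ↔ v ≠ b' ∧ v ≠ b ∧ G.Adj u₂ v := by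
    simpa using exists_mem_range_iff_of_card_eq (s := ((G.neighborFinset u₂).erase b).erase b')
      (by simp [Finset.card_erase_of_mem, hb₂.symm, h₂b', hbb'.symm, hu₂])
  obtain ⟨s₃, hs₃⟩ : ∃ s : Fin r → V, ∀ v, v ∈ Set.range s ↔ v ≠ c ∧ G.Adj u₃ v := by
    simpa using exists_mem_range_iff_of_card_eq (s := (G.neighborFinset u₃).erase c)
      (by simp [Finset.card_erase_of_mem, hc₃.symm, hu₃])
  let f : G2graph p q r →g G :=
    { toFun := Sum.elim ![u₁, a, b, u₂, b', c, u₃] (Sum.elim s₁ (Sum.elim s₂ s₃))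
      map_rel' := adj_of_G2graph_adj
        (fun i => by fin_cases i <;> assumption)
        (fun j => ((hs₁ _).1 ⟨j, rfl⟩).2)
        (fun j => ((hs₂ _).1 ⟨j, rfl⟩).2.2)
        (fun j => ((hs₃ _).1 ⟨j, rfl⟩).2) }
  refine ⟨f, (Fintype.bijective_iff_surjective_and_card f).2 ⟨fun v => ?_, ?_⟩⟩
  · have hv : (v = u₁ ∨ G.Adj u₁ v) ∨ (v = u₂ ∨ G.Adj u₂ v) ∨ (v = u₃ ∨ G.Adj u₃ v) := by
      simpa using hdom.exists_eq_or_adj v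
    suffices v = u₁ ∨ v = a ∨ v = b ∨ v = u₂ ∨ v = b' ∨ v = c ∨ v = u₃ ∨
        v ∈ Set.range s₁ ∨ v ∈ Set.range s₂ ∨ v ∈ Set.range s₃ by
      rcases this with h | h | h | h | h | h | h | ⟨j, h⟩ | ⟨j, h⟩ | ⟨j, h⟩
      exacts [⟨.inl 0, h.symm⟩, ⟨.inl 1, h.symm⟩, ⟨.inl 2, h.symm⟩, ⟨.inl 3, h.symm⟩,
        ⟨.inl 4, h.symm⟩, ⟨.inl 5, h.symm⟩, ⟨.inl 6, h.symm⟩, ⟨.inr (.inl j), h⟩,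
        ⟨.inr (.inr (.inl j)), h⟩, ⟨.inr (.inr (.inr j)), h⟩]
    rw [hs₁, hs₂, hs₃]
    tauto
  · simp only [Fintype.card_sum, Fintype.card_fin, hcard]
    omega

end G2graph

section Halo

variable {V : Type*} [Fintype V] [DecidableEq V] {G : SimpleGraph V} [DecidableRel G.Adj]
  {l : ℝ} {c : V} {z : V → ℝ}

/-- The extension to `V` of a weight `z` on the vertices outside the closed neighbourhood of `c`:
it is `l` at `c`, and the values on the neighbours of `c` are chosen so that the eigenvalue equation
for `l` holds there (up to edges among the neighbours). -/
noncomputable def haloVector (G : SimpleGraph V) [DecidableRel G.Adj] (l : ℝ) (c : V) (z : V → ℝ)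
    (v : V) : ℝ :=
  if v = c then l else if G.Adj c v then 1 + (∑ w ∈ G.neighborFinset v, z w) / l else z v

theorem haloVector_self : haloVector G l c z c = l := if_pos rfl

theorem haloVector_of_adj {v : V} (hv : G.Adj c v) :
    haloVector G l c z v = 1 + (∑ w ∈ G.neighborFinset v, z w) / l := by
  rw [haloVector, if_neg hv.ne', if_pos hv]

theorem haloVector_of_not_adj {v : V} (hvc : v ≠ c) (hv : ¬G.Adj c v) :
    haloVector G l c z v = z v := by
  rw [haloVector, if_neg hvc, if_neg hv]

theorem le_haloVector (hl : 0 < l) (hz : ∀ v, 0 ≤ z v)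
    (hzc : ∀ v, v = c ∨ G.Adj c v → z v = 0) (v : V) : z v ≤ haloVector G l c z v := by
  by_cases hvc : v = c
  · rw [hzc v (Or.inl hvc), hvc, haloVector_self]
    exact hl.le
  by_cases hv : G.Adj c v
  · rw [hzc v (Or.inr hv), haloVector_of_adj hv]
    have := Finset.sum_nonneg fun w (_ : w ∈ G.neighborFinset v) => hz w
    positivity
  · rw [haloVector_of_not_adj hvc hv]

theorem lt_specRad_of_haloVector (hl : 0 < l) (hz : ∀ v, 0 ≤ z v)
    (hzc : ∀ v, v = c ∨ G.Adj c v → z v = 0)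
    (h : ∀ v, z v ≠ 0 → l * z v ≤ ∑ w ∈ G.neighborFinset v, haloVector G l c z w)
    (hc : l ^ 2 < ∑ v ∈ G.neighborFinset c, haloVector G l c z v) : l < specRad G := by
  have hle := le_haloVector hl hz hzc
  have hnonneg (v : V) : 0 ≤ haloVector G l c z v := (hz v).trans (hle v)
  have hc' : l * haloVector G l c z c < ∑ v ∈ G.neighborFinset c, haloVector G l c z v := by
    rwa [haloVector_self, ← sq]
  refine lt_specRad_of_mul_le_sum_neighborFinset hnonneg (fun v => ?_)
    ⟨c, by rwa [haloVector_self], hc'⟩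
  obtain rfl | hvc := eq_or_ne v c
  · exact hc'.le
  by_cases hv : G.Adj c v
  · have hcv : c ∈ G.neighborFinset v := by simpa using hv.symm
    calc l * haloVector G l c z v
        = l + z c + ∑ w ∈ (G.neighborFinset v).erase c, z w := by
          rw [haloVector_of_adj hv, add_assoc, Finset.add_sum_erase _ _ hcv]
          field_simp
      _ ≤ haloVector G l c z c + ∑ w ∈ (G.neighborFinset v).erase c, haloVector G l c z w := by
          rw [hzc c (Or.inl rfl), add_zero, haloVector_self]
          gcongr with w
          exact hle w
      _ = ∑ w ∈ G.neighborFinset v, haloVector G l c z w := Finset.add_sum_erase _ _ hcv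
  · rw [haloVector_of_not_adj hvc hv]
    by_cases hzv : z v = 0
    · rw [hzv, mul_zero]
      exact Finset.sum_nonneg fun w _ => hnonneg w
    · exact h v hzv

theorem degree_add_sum_div_le_sum_haloVector (hl : 0 < l) (hz : ∀ v, 0 ≤ z v) {s : Finset V}
    (hs : ∀ w ∈ s, ∃ v, G.Adj c v ∧ G.Adj v w) :
    G.degree c + (∑ w ∈ s, z w) / l ≤ ∑ v ∈ G.neighborFinset c, haloVector G l c z v := by
  have hnonneg (v w : V) : 0 ≤ if G.Adj v w then z w else 0 := by
    split_ifs
    exacts [hz w, le_rfl]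
  rw [Finset.sum_congr rfl fun v hv => haloVector_of_adj ((G.mem_neighborFinset c v).1 hv),
    Finset.sum_add_distrib, ← Finset.sum_div, Finset.sum_const, card_neighborFinset_eq_degree,
    nsmul_one]
  gcongr
  calc ∑ w ∈ s, z w
      ≤ ∑ w ∈ s, ∑ v ∈ G.neighborFinset c, if G.Adj v w then z w else 0 :=
        Finset.sum_le_sum fun w hw => by
          obtain ⟨v, hcv, hvw⟩ := hs w hw
          simpa [hvw] using Finset.single_le_sum (fun v _ => hnonneg v w)
            ((G.mem_neighborFinset c v).2 hcv)
    _ ≤ ∑ w, ∑ v ∈ G.neighborFinset c, if G.Adj v w then z w else 0 :=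
        Finset.sum_le_univ_sum_of_nonneg fun w => Finset.sum_nonneg fun v _ => hnonneg v w
    _ = ∑ v ∈ G.neighborFinset c, ∑ w ∈ G.neighborFinset v, z w := by
        simp_rw [sum_neighborFinset_eq_sum_ite G z]
        exact Finset.sum_comm

theorem one_add_div_add_sum_le_sum_haloVector (hl : 0 < l) (hz : ∀ v, 0 ≤ z v)
    (hzc : ∀ v, v = c ∨ G.Adj c v → z v = 0) {v w : V} (hcv : G.Adj c v) (hvw : G.Adj v w) :
    1 + z w / l + ∑ x ∈ G.neighborFinset w, z x ≤
      ∑ x ∈ G.neighborFinset w, haloVector G l c z x := by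
  have hv : v ∈ G.neighborFinset w := by simpa using hvw.symm
  rw [← Finset.add_sum_erase _ _ hv, ← Finset.add_sum_erase _ (haloVector G l c z) hv,
    hzc v (Or.inr hcv), zero_add, haloVector_of_adj hcv]
  gcongr with x
  · exact Finset.single_le_sum (fun x _ => hz x) (by simpa using hvw)
  · exact le_haloVector hl hz hzc x

theorem lt_specRad_of_forall_adj_neighbor {s : Finset V} (hl0 : 0 < l) (hl : 1 < l ^ 2)
    (hs : ∀ w ∈ s, w ≠ c ∧ ¬G.Adj c w ∧ ∃ v, G.Adj c v ∧ G.Adj v w)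
    (hc : (l ^ 2 - G.degree c) * (l ^ 2 - 1) < s.card) : l < specRad G := by
  have hl1 : 0 < l ^ 2 - 1 := sub_pos.2 hl
  let z : V → ℝ := fun v => if v ∈ s then l / (l ^ 2 - 1) else 0
  have hz (v : V) : 0 ≤ z v := by
    simp only [z]
    split_ifs <;> positivity
  have hzc (v : V) (hv : v = c ∨ G.Adj c v) : z v = 0 :=
    if_neg fun hvs => hv.elim (hs v hvs).1 (hs v hvs).2.1
  refine lt_specRad_of_haloVector hl0 hz hzc (fun w hw => ?_) ?_
  · have hws : w ∈ s := by_contra fun hws => hw (if_neg hws)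
    obtain ⟨-, -, v, hcv, hvw⟩ := hs w hws
    have hsum := Finset.sum_nonneg fun x (_ : x ∈ G.neighborFinset w) => hz x
    have heq : l * z w = 1 + z w / l := by
      simp only [z, if_pos hws]
      field_simp
      ring
    linarith [one_add_div_add_sum_le_sum_haloVector hl0 hz hzc hcv hvw]
  · refine lt_of_lt_of_le ?_
      (degree_add_sum_div_le_sum_haloVector hl0 hz fun w hw => (hs w hw).2.2)
    have hsum : (∑ w ∈ s, z w) / l = s.card / (l ^ 2 - 1) := by
      rw [Finset.sum_congr rfl fun w hw => if_pos hw, Finset.sum_const, nsmul_eq_mul]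
      field_simp
    rwa [hsum, ← sub_lt_iff_lt_add', lt_div_iff₀ hl1]

theorem lt_specRad_of_adj_adj_neighbor {a b b' : V} (hl0 : 0 < l) (hl : 2 < l ^ 2)
    (hc : (l ^ 2 - G.degree c) * (l ^ 2 - 2) < 1)
    (hca : G.Adj c a) (hab : G.Adj a b) (hbb' : G.Adj b b') (hbc : b ≠ c) (hcb : ¬G.Adj c b)
    (hbc' : b' ≠ c) (hcb' : ¬G.Adj c b') : l < specRad G := by
  have hl2 : 0 < l ^ 2 - 2 := sub_pos.2 hl
  let z : V → ℝ := fun v =>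
    if v = b then l / (l ^ 2 - 2) else if v = b' then 1 / (l ^ 2 - 2) else 0
  have hzb : z b = l / (l ^ 2 - 2) := if_pos rfl
  have hzb' : z b' = 1 / (l ^ 2 - 2) := by simp [z, hbb'.ne']
  have hz (v : V) : 0 ≤ z v := by
    simp only [z]
    split_ifs <;> positivity
  have hzc (v : V) (hv : v = c ∨ G.Adj c v) : z v = 0 := by
    have hvb : v ≠ b := by rintro rfl; tauto
    have hvb' : v ≠ b' := by rintro rfl; tauto
    simp [z, hvb, hvb']
  refine lt_specRad_of_haloVector hl0 hz hzc (fun w hw => ?_) ?_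
  · obtain rfl | rfl : w = b ∨ w = b' := by
      by_contra! h
      exact hw (by simp [z, h])
    · have hsum : z b' ≤ ∑ x ∈ G.neighborFinset w, z x :=
        Finset.single_le_sum (fun x _ => hz x) (by simpa using hbb')
      have heq : l * z w = 1 + z w / l + z b' := by
        rw [hzb, hzb']
        field_simp
        ring
      linarith [one_add_div_add_sum_le_sum_haloVector hl0 hz hzc hca hab]
    · calc l * z w = z b := by rw [hzb, hzb', mul_one_div]
        _ ≤ ∑ x ∈ G.neighborFinset w, z x :=
          Finset.single_le_sum (fun x _ => hz x) (by simpa using hbb'.symm)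
        _ ≤ _ := Finset.sum_le_sum fun x _ => le_haloVector hl0 hz hzc x
  · refine lt_of_lt_of_le ?_ (degree_add_sum_div_le_sum_haloVector hl0 hz (s := {b})
      (by simpa using ⟨a, hca, hab⟩))
    rw [Finset.sum_singleton, hzb, div_div_cancel_left' hl0.ne', ← one_div, ← sub_lt_iff_lt_add',
      lt_div_iff₀ hl2]
    exact hc

theorem lt_specRad_of_degree_add_three_le (hG : G.Connected) (hl0 : 0 < l) (hl : 3 ≤ l ^ 2)
    (hcard : G.degree c + 3 ≤ Fintype.card V)
    (hc : (l ^ 2 - G.degree c) * (l ^ 2 - 2) < 1) : l < specRad G := by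
  set N := insert c (G.neighborFinset c) with hN
  have hNcard : N.card = G.degree c + 1 := by
    rw [hN, Finset.card_insert_of_notMem (G.notMem_neighborFinset_self c),
      card_neighborFinset_eq_degree]
  have hout {v : V} (hv : v ∉ N) : v ≠ c ∧ ¬G.Adj c v := by simpa [hN] using hv
  have hin {u v : V} (hu : u ∈ N) (hv : v ∉ N) (huv : G.Adj u v) : G.Adj c u := by
    obtain rfl | hu : u = c ∨ G.Adj c u := by simpa [hN] using hu
    exacts [absurd huv (hout hv).2, hu]
  obtain ⟨a, ha, b, hb, hab⟩ := exists_adj_of_card_lt_card hG (s := N) ⟨c, by simp [hN]⟩ (by omega)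
  obtain ⟨a', ha', b', hb', hab'⟩ := exists_adj_of_card_lt_card hG (s := insert b N) ⟨b, by simp⟩
    (by rw [Finset.card_insert_of_notMem hb]; omega)
  obtain ⟨hbb', hb'N⟩ : b' ≠ b ∧ b' ∉ N := not_or.1 (Finset.mem_insert.not.1 hb')
  obtain rfl | ha' := Finset.mem_insert.1 ha'
  · exact lt_specRad_of_adj_adj_neighbor hl0 (by linarith) hc (hin ha hb hab) hab hab'
      (hout hb).1 (hout hb).2 (hout hb'N).1 (hout hb'N).2
  · refine lt_specRad_of_forall_adj_neighbor (c := c) (s := {b, b'}) hl0 (by linarith) ?_ ?_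
    · simp only [Finset.mem_insert, Finset.mem_singleton]
      rintro w (rfl | rfl)
      exacts [⟨(hout hb).1, (hout hb).2, a, hin ha hb hab, hab⟩,
        ⟨(hout hb'N).1, (hout hb'N).2, a', hin ha' hb'N hab', hab'⟩]
    · rw [Finset.card_pair hbb'.symm]
      push_cast
      nlinarith

end Halo

section Broom

variable {V : Type*} [DecidableEq V] {G : SimpleGraph V} [DecidableRel G.Adj] {l d : ℝ}

/-- The weight `l` at `u`, `1` at each neighbour of `u`, and `d` more at the vertex `a`: the part
of `g2Vector` carried by the star at `u`, whose link leaves through `a`. -/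
def broom (G : SimpleGraph V) [DecidableRel G.Adj] (l d : ℝ) (u a v : V) : ℝ :=
  (if v = u then l else 0) + (if G.Adj u v then 1 else 0) + if v = a then d else 0

theorem broom_nonneg (hl : 0 ≤ l) (hd : 0 ≤ d) (u a v : V) : 0 ≤ broom G l d u a v := by
  unfold broom
  positivity

variable [Fintype V]

theorem sum_neighborFinset_broom (u a v : V) :
    ∑ w ∈ G.neighborFinset v, broom G l d u a w =
      (if G.Adj u v then l else 0) + {w ∈ G.neighborFinset v | G.Adj u w}.card +
        if G.Adj a v then d else 0 := by
  simp [broom, Finset.sum_add_distrib, G.adj_comm v]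

theorem mul_broom_le_sum_neighborFinset (hd : 0 ≤ d) {u a : V} (hua : G.Adj u a)
    (hu : G.degree u = l ^ 2 - d) (v : V) :
    l * broom G l d u a v ≤
      ∑ w ∈ G.neighborFinset v, broom G l d u a w + if v = a then l * d else 0 := by
  rw [sum_neighborFinset_broom, broom]
  obtain rfl | hvu := eq_or_ne v u
  · have hfilter : {w ∈ G.neighborFinset v | G.Adj v w} = G.neighborFinset v :=
      Finset.filter_true_of_mem fun w => by simp
    rw [hfilter, card_neighborFinset_eq_degree, hu]
    simp only [hua.ne, hua.symm, G.irrefl, if_true, if_false]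
    linarith
  · have hcard : (0 : ℝ) ≤ {w ∈ G.neighborFinset v | G.Adj u w}.card := Nat.cast_nonneg _
    rw [if_neg hvu]
    split_ifs <;> linarith [hcard]

theorem mul_broom_add_le_sum_neighborFinset {u a v : V} (hua : G.Adj u a)
    (hav : G.Adj a v) (hv : v ≠ u ∧ ¬G.Adj u v) :
    l * broom G l d u a v + (d + 1) ≤ ∑ w ∈ G.neighborFinset v, broom G l d u a w := by
  have hcard : 1 ≤ {w ∈ G.neighborFinset v | G.Adj u w}.card :=
    Finset.card_pos.2 ⟨a, by simp [hua, hav.symm]⟩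
  have hcard' : (1 : ℝ) ≤ {w ∈ G.neighborFinset v | G.Adj u w}.card := by exact_mod_cast hcard
  rw [sum_neighborFinset_broom, broom, if_neg hv.1, if_neg hv.2, if_neg hav.ne', if_pos hav,
    if_neg hv.2]
  linarith

theorem exists_pos_mul_add_one_eq (hl : 0 < l) (hd : 0 < d)
    (hd_eq : l ^ 2 * d ^ 2 = (d + 1) * (d + 2)) :
    ∃ w, 0 < w ∧ w * (d + 1) = l * d ∧ w * (l * d) < 2 * (d + 1) := by
  refine ⟨l * d / (d + 1), by positivity, by field_simp, ?_⟩
  rw [div_mul_eq_mul_div, div_lt_iff₀ (by positivity)]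
  nlinarith

-- Each of `x`, `y`, `z` falls short of the eigenvalue inequality at one vertex only, and there the
-- surplus of the others makes up for it.
theorem lt_specRad_of_compensated_deficits {x y z : V → ℝ} {a b c : V} {k e w : ℝ}
    (hx0 : ∀ v, 0 ≤ x v) (hy0 : ∀ v, 0 ≤ y v) (hz0 : ∀ v, 0 ≤ z v) (hyb0 : 0 < y b) (hac : a ≠ c)
    (hx : ∀ v, l * x v ≤ ∑ u ∈ G.neighborFinset v, x u + if v = a then k else 0)
    (hy : ∀ v, l * y v ≤ ∑ u ∈ G.neighborFinset v, y u + if v = b then k else 0)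
    (hz : ∀ v, l * z v ≤ ∑ u ∈ G.neighborFinset v, z u + if v = c then k else 0)
    (hxb : l * x b + e ≤ ∑ u ∈ G.neighborFinset b, x u)
    (hzb : l * z b + e ≤ ∑ u ∈ G.neighborFinset b, z u)
    (hya : l * y a + e ≤ ∑ u ∈ G.neighborFinset a, y u)
    (hyc : l * y c + e ≤ ∑ u ∈ G.neighborFinset c, y u)
    (hw : 0 < w) (hwe : w * e = k) (hwk : w * k < 2 * e) : l < specRad G := by
  let t : V → ℝ := fun v => x v + z v + w * y v
  have ht (v : V) : ∑ u ∈ G.neighborFinset v, t u = ∑ u ∈ G.neighborFinset v, x u +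
      ∑ u ∈ G.neighborFinset v, z u + w * ∑ u ∈ G.neighborFinset v, y u := by
    simp only [t, Finset.sum_add_distrib, Finset.mul_sum]
  have hb : l * t b < ∑ u ∈ G.neighborFinset b, t u := by
    have hyb := hy b
    rw [if_pos rfl] at hyb
    rw [ht]
    linear_combination hxb + hzb + w * hyb + hwk
  have hle (v : V) : l * t v ≤ ∑ u ∈ G.neighborFinset v, t u := by
    have hxv := hx v
    have hyv := hy v
    have hzv := hz v
    obtain rfl | hvb := eq_or_ne v b
    · exact hb.le
    rw [if_neg hvb] at hyv
    rw [ht]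
    obtain rfl | hva := eq_or_ne v a
    · rw [if_pos rfl] at hxv
      rw [if_neg hac] at hzv
      linear_combination hxv + hzv + w * hya - hwe
    rw [if_neg hva] at hxv
    obtain rfl | hvc := eq_or_ne v c
    · rw [if_pos rfl] at hzv
      linear_combination hxv + hzv + w * hyc - hwe
    rw [if_neg hvc] at hzv
    linear_combination hxv + hzv + w * hyv
  refine lt_specRad_of_mul_le_sum_neighborFinset
    (fun v => add_nonneg (add_nonneg (hx0 v) (hz0 v)) (mul_nonneg hw.le (hy0 v))) hle ⟨b, ?_, hb⟩
  exact add_pos_of_nonneg_of_pos (add_nonneg (hx0 b) (hz0 b)) (mul_pos hw hyb0)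

theorem lt_specRad_of_broom {u₁ u₂ u₃ a b c : V} (hl : 0 < l) (hd : 0 < d)
    (hd_eq : l ^ 2 * d ^ 2 = (d + 1) * (d + 2)) (hu₁ : G.degree u₁ = l ^ 2 - d)
    (hu₂ : G.degree u₂ = l ^ 2 - d) (hu₃ : G.degree u₃ = l ^ 2 - d)
    (h₁a : G.Adj u₁ a) (hab : G.Adj a b) (h₂b : G.Adj u₂ b) (hbc : G.Adj b c) (h₃c : G.Adj u₃ c)
    (hb₁ : b ≠ u₁ ∧ ¬G.Adj u₁ b) (hb₃ : b ≠ u₃ ∧ ¬G.Adj u₃ b)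
    (ha₂ : a ≠ u₂ ∧ ¬G.Adj u₂ a) (hc₂ : c ≠ u₂ ∧ ¬G.Adj u₂ c) (hac : a ≠ c) : l < specRad G := by
  obtain ⟨w, hw, hwd, hwl⟩ := exists_pos_mul_add_one_eq hl hd hd_eq
  have hb : 0 < broom G l d u₂ b b := by
    rw [broom, if_pos h₂b, if_pos rfl]
    positivity
  exact lt_specRad_of_compensated_deficits (broom_nonneg hl.le hd.le u₁ a)
    (broom_nonneg hl.le hd.le u₂ b) (broom_nonneg hl.le hd.le u₃ c) hb hac
    (mul_broom_le_sum_neighborFinset hd.le h₁a hu₁)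
    (mul_broom_le_sum_neighborFinset hd.le h₂b hu₂)
    (mul_broom_le_sum_neighborFinset hd.le h₃c hu₃)
    (mul_broom_add_le_sum_neighborFinset h₁a hab hb₁)
    (mul_broom_add_le_sum_neighborFinset h₃c hbc.symm hb₃)
    (mul_broom_add_le_sum_neighborFinset h₂b hab.symm ha₂)
    (mul_broom_add_le_sum_neighborFinset h₂b hbc hc₂) hw hwd hwl

end Broom

theorem IsPerfectCode.lt_specRad_or_nonempty_iso_G2graph {V : Type*} [Fintype V] [DecidableEq V]
    {G : SimpleGraph V} [DecidableRel G.Adj] {C : Finset V} {l d : ℝ} {q : ℕ}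
    (hC : IsPerfectCode G C) (hG : G.Connected) (hCcard : C.card = 3)
    (hcard : Fintype.card V = 3 * (q + 3)) (hdeg : ∀ u ∈ C, G.degree u + 1 = q + 3)
    (hl : 0 < l) (hd : 0 < d) (hld : l ^ 2 = q + 2 + d)
    (hd_eq : l ^ 2 * d ^ 2 = (d + 1) * (d + 2)) :
    l < specRad G ∨ Nonempty (G ≃g G2graph (q + 1) q (q + 1)) := by
  classical
  obtain ⟨u₁, u₂, u₃, rfl, h₁₂, h₁₃, h₂₃, ⟨a, b, h₁a, hab, hb₂⟩, b', c, h₂b', hb'c, hc₃⟩ :=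
    hC.exists_linked_linked hG hCcard
  have hu₁ : u₁ ∈ ({u₁, u₂, u₃} : Finset V) := by simp
  have hu₂ : u₂ ∈ ({u₁, u₂, u₃} : Finset V) := by simp
  have hu₃ : u₃ ∈ ({u₁, u₂, u₃} : Finset V) := by simp
  have hdeg' (u : V) (hu : u ∈ ({u₁, u₂, u₃} : Finset V)) : G.degree u = q + 2 := by
    have := hdeg u hu
    omega
  by_cases hbb' : b = b'
  · subst hbb'
    have hdegl (u : V) (hu : u ∈ ({u₁, u₂, u₃} : Finset V)) : G.degree u = l ^ 2 - d := by
      rw [hdeg' u hu, hld]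
      push_cast
      ring
    have hac : a ≠ c := by
      rintro rfl
      exact (hC.ne_and_not_adj hu₁ hu₃ h₁₃ h₁a).2 hc₃.symm
    exact Or.inl <| lt_specRad_of_broom hl hd hd_eq (hdegl u₁ hu₁) (hdegl u₂ hu₂) (hdegl u₃ hu₃)
      h₁a hab h₂b' hb'c hc₃.symm (hC.ne_and_not_adj hu₂ hu₁ h₁₂.symm h₂b')
      (hC.ne_and_not_adj hu₂ hu₃ h₂₃ h₂b') (hC.ne_and_not_adj hu₁ hu₂ h₁₂ h₁a)
      (hC.ne_and_not_adj hu₃ hu₂ h₂₃.symm hc₃.symm) hac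
  · obtain ⟨f, hf⟩ := exists_bijective_hom_of_isDomSet (p := q + 1) (q := q) (r := q + 1)
      hC.isDomSet (by omega) (hdeg' u₁ hu₁) (hdeg' u₂ hu₂) (hdeg' u₃ hu₃) h₁a hab hb₂ h₂b' hb'c
      hc₃ hbb'
    have hspec := specRad_G2graph hl hd hld hd_eq
    simpa only [hspec] using specRad_lt_or_nonempty_iso_of_bijective (g2Vector_pos hl hd _ _ _)
      (by simpa only [hspec] using sum_neighborFinset_g2Vector hl hd hld hd_eq) f hf

theorem specRad_G2graph_lt_or_nonempty_iso {V : Type*} [Fintype V] [DecidableEq V]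
    {G : SimpleGraph V} {q : ℕ} (hq : 1 ≤ q) (hG : G.Connected)
    (hcard : 3 * (q + 3) ≤ Fintype.card V) (hdom : domNum G ≤ 3) :
    specRad (G2graph (q + 1) q (q + 1)) < specRad G ∨
      Nonempty (G ≃g G2graph (q + 1) q (q + 1)) := by
  classical
  have hq' : (1 : ℝ) ≤ q := by exact_mod_cast hq
  obtain ⟨d, hd, hd2, hd_eq⟩ := exists_sq_mul_add_eq (k := q + 2) (by linarith)
  obtain ⟨l, hl, hld⟩ : ∃ l : ℝ, 0 < l ∧ l ^ 2 = q + 2 + d :=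
    ⟨√(q + 2 + d), by positivity, Real.sq_sqrt (by positivity)⟩
  rw [← hld] at hd_eq
  rw [specRad_G2graph hl hd hld hd_eq]
  by_cases hdeg : ∀ v, G.degree v < q + 3
  · obtain ⟨hV, C, hC, hCcard, hCdeg⟩ :=
      exists_isPerfectCode_of_degree_lt (by omega) hdeg hcard hdom
    exact hC.lt_specRad_or_nonempty_iso_G2graph hG hCcard hV hCdeg hl hd hld hd_eq
  push Not at hdeg
  obtain ⟨c, hc⟩ := hdeg
  left
  obtain hc | hc := hc.eq_or_lt
  · have hgap : l ^ 2 - G.degree c = d - 1 := by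
      rw [← hc, hld]
      push_cast
      ring
    refine lt_specRad_of_degree_add_three_le (c := c) hG hl (by linarith) (by omega) ?_
    rw [hgap]
    exact sub_one_mul_sub_two_lt_one hd hd2 hd_eq
  · have hlt : l ^ 2 < G.degree c := by
      have : (q + 4 : ℝ) ≤ G.degree c := by exact_mod_cast hc
      linarith
    refine lt_specRad_of_forall_adj_neighbor (c := c) (s := ∅) hl (by linarith) (by simp) ?_
    rw [Finset.card_empty, Nat.cast_zero]
    exact mul_neg_of_neg_of_pos (by linarith) (by linarith)

theorem domNum_three_min_specRad_n_eq_3m_general {V : Type*} [Fintype V] [DecidableEq V] (m : ℕ)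
    (hm : 4 ≤ m) (G : SimpleGraph V) (hcard : 3 * m ≤ Fintype.card V) (hconn : G.Connected)
    (hdom : domNum G ≤ 3) :
    specRad (G2graph (m - 2) (m - 3) (m - 2)) ≤ specRad G ∧
    (specRad G = specRad (G2graph (m - 2) (m - 3) (m - 2)) ↔
      Nonempty (G ≃g G2graph (m - 2) (m - 3) (m - 2))) := by
  obtain ⟨q, rfl⟩ := Nat.exists_eq_add_of_le' (show 3 ≤ m by omega)
  have h := specRad_G2graph_lt_or_nonempty_iso (q := q) (by omega) hconn hcard hdom
  refine ⟨?_, fun heq => h.resolve_left heq.not_gt, fun ⟨e⟩ => specRad_congr e⟩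
  rcases h with hlt | ⟨⟨e⟩⟩
  exacts [hlt.le, (specRad_congr e).ge]

theorem domNum_three_min_specRad_n_eq_3m (m : ℕ) (hm : 4 ≤ m)
    (G : SimpleGraph (Fin (3 * m))) (hconn : G.Connected) (hdom : domNum G = 3) :
    specRad (G2graph (m - 2) (m - 3) (m - 2)) ≤ specRad G ∧
    (specRad G = specRad (G2graph (m - 2) (m - 3) (m - 2)) ↔
      Nonempty (G ≃g G2graph (m - 2) (m - 3) (m - 2))) :=
  domNum_three_min_specRad_n_eq_3m_general m hm G (by simp) hconn hdom.le
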